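/- arXiv:1210.2610 — 2 statements merged into one kernel-verified Lean document; each statement's English description precedes it below -/
import Mathlib

section
/- For every natural number n, c(n, n+1) equals the n-th Catalan number. -/
/-!
A context of size `n` has at most `n + 1` holes (`c_eq_zero`). Hence in the recurrence for
`c (n+1) (n+2)` the abstraction sum is empty, and since `(k + 1) + (n - k + 1) = n + 2`, the
application term of index `k` contributes only when both factors have the maximal number of holes,
i.e. when `j = k + 1`. What remains is Segner's recurrence for the Catalan numbers.
-/

/-- `c n i` counts `i`-contexts (closed λ-terms with `i` holes) of size `n`. -/
def c : ℕ → ℕ → ℕ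
  | 0, i => if i = 1 then 1 else 0
  | n+1, i => (∑ j ∈ Finset.Icc i (n+1), Nat.choose j i * c n j)
      + ∑ j ∈ Finset.range (i+1), ∑ k ∈ (Finset.range (n+1)).attach,
          c k.1 j * c (n - k.1) (i - j)
termination_by n _ => n
decreasing_by
  · exact Nat.lt_succ_self n
  · exact Finset.mem_range.mp k.2
  · exact Nat.lt_succ_of_le (Nat.sub_le n k.1)

/-- The recurrence for `c` as a plain double sum, without the `attach` needed for termination. -/
theorem c_succ (n i : ℕ) : c (n+1) i = (∑ j ∈ Finset.Icc i (n+1), Nat.choose j i * c n j)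
    + ∑ j ∈ Finset.range (i+1), ∑ k ∈ Finset.range (n+1), c k j * c (n - k) (i - j) := by
  rw [c]
  congr 1
  refine Finset.sum_congr rfl fun j _ => ?_
  exact Finset.sum_attach (Finset.range (n+1)) fun k => c k j * c (n - k) (i - j)

theorem c_eq_zero (n : ℕ) : ∀ i, n + 1 < i → c n i = 0 := by
  induction n using Nat.strong_induction_on with
  | _ n ih =>
    intro i hi
    cases n with
    | zero =>
      rw [c, if_neg (by omega)]
    | succ n =>
      rw [c_succ, Finset.Icc_eq_empty (by omega), Finset.sum_empty, zero_add]
      refine Finset.sum_eq_zero fun j hj => Finset.sum_eq_zero fun k hk => ?_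
      rw [Finset.mem_range] at hj hk
      by_cases h : k + 1 < j
      · rw [ih k hk j h, zero_mul]
      · rw [ih (n - k) (by omega) (i - j) (by omega), mul_zero]

/-- Contexts with the maximal number of holes satisfy Segner's recurrence. -/
theorem c_succ_max (n : ℕ) :
    c (n+1) (n+2) = ∑ k ∈ Finset.range (n+1), c k (k+1) * c (n - k) (n - k + 1) := by
  rw [c_succ, Finset.Icc_eq_empty (by omega), Finset.sum_empty, zero_add, Finset.sum_comm]
  refine Finset.sum_congr rfl fun k hk => ?_
  rw [Finset.mem_range] at hk
  rw [Finset.sum_eq_single_of_mem (k + 1) (Finset.mem_range.mpr (by omega)),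
    show n + 2 - (k + 1) = n - k + 1 by omega]
  intro j hj hne
  rw [Finset.mem_range] at hj
  by_cases h : k + 1 < j
  · rw [c_eq_zero k j h, zero_mul]
  · rw [c_eq_zero (n - k) (n + 2 - j) (by omega), mul_zero]

/-- `c n (n+1)` equals the `n`-th Catalan number. -/
theorem c_catalan (n : ℕ) : c n (n+1) = catalan n := by
  induction n using Nat.strong_induction_on with
  | _ n ih =>
    cases n with
    | zero => rw [c, if_pos rfl, catalan_zero]
    | succ n =>
      rw [c_succ_max, catalan_succ, Fin.sum_univ_eq_sum_range (fun k => catalan k * catalan (n - k))]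
      refine Finset.sum_congr rfl fun k hk => ?_
      rw [Finset.mem_range] at hk
      rw [ih k hk, ih (n - k) (by omega)]
end

section
/- For all natural numbers n and m, the integer identity f(n,m) = ∑_{i=0}^{m} (−1)^{m+i}·C(m,i)·T(n,i) holds. -/
/-!
With `Δ` the forward difference with step one, the right-hand side is `Δ^m (T n) 0`, so the claim is
that `f n m` is the `m`-th Newton coefficient of `T n`. It therefore suffices that `Δ^m (T n) 0`
satisfies the recursion defining `f`. The shift in the recursion of `T` contributes
`Δ^m (T n) 0 + Δ^(m+1) (T n) 0`, since the shift is `1 + Δ`. For the products one needs the Leibniz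
rule `iter_fwdDiff_mul`: if `A`, `B` are the forward differences in the two arguments of
`F x y = g x * h y`, then differencing along the diagonal is the operator `A * B + (A + B)`, and
expanding its `m`-th power by the binomial theorem twice (`A` and `B` commute) yields the double sum
over `c` and `k`.
-/

/-- `T n m` counts λ-terms of size `n` with at most `m` distinct free de Bruijn indices. -/
def T : ℕ → ℕ → ℕ
  | 0, m => m
  | n+1, m => T n (m+1) + ∑ i ∈ (Finset.range (n+1)).attach, T i.1 m * T (n - i.1) m
termination_by n _ => n
decreasing_by
  · exact Nat.lt_succ_self n
  · exact Finset.mem_range.mp i.2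
  · exact Nat.lt_succ_of_le (Nat.sub_le n i.1)

/-- `f n m` counts λ-terms of size `n` with exactly `m` distinct free variables. -/
def f : ℕ → ℕ → ℕ
  | 0, m => if m = 1 then 1 else 0
  | n+1, m => f n m + f n (m+1) +
      ∑ p ∈ (Finset.range (n+1)).attach, ∑ c ∈ Finset.range (m+1),
        ∑ k ∈ Finset.range (m - c + 1),
          Nat.choose m c * Nat.choose (m - c) k * f p.1 (k + c) * f (n - p.1) (m - k)
termination_by n _ => n
decreasing_by
  · exact Nat.lt_succ_self n
  · exact Nat.lt_succ_self n
  · exact Finset.mem_range.mp p.2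
  · exact Nat.lt_succ_of_le (Nat.sub_le n p.1)

/-- The forward difference in the first argument. -/
def diffLeft : Module.End ℤ (ℕ → ℕ → ℤ) where
  toFun F x y := F (x + 1) y - F x y
  map_add' F G := by ext x y; simp only [Pi.add_apply]; ring
  map_smul' r F := by ext x y; simp only [Pi.smul_apply, smul_eq_mul, RingHom.id_apply]; ring

/-- The forward difference in the second argument. -/
def diffRight : Module.End ℤ (ℕ → ℕ → ℤ) where
  toFun F x y := F x (y + 1) - F x y
  map_add' F G := by ext x y; simp only [Pi.add_apply]; ring
  map_smul' r F := by ext x y; simp only [Pi.smul_apply, smul_eq_mul, RingHom.id_apply]; ring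

theorem commute_diffLeft_diffRight : Commute diffLeft diffRight := by
  refine LinearMap.ext fun F => ?_
  ext x y
  simp only [Module.End.mul_apply, diffLeft, diffRight, LinearMap.coe_mk, AddHom.coe_mk]
  ring

theorem diffLeft_pow_mul (i : ℕ) (g h : ℕ → ℤ) :
    (diffLeft ^ i) (fun x y => g x * h y) = fun x y => ((fwdDiff 1)^[i] g) x * h y := by
  induction i generalizing g with
  | zero => simp
  | succ i ih =>
    have h1 : diffLeft (fun x y => g x * h y) = fun x y => fwdDiff 1 g x * h y := by
      ext x y
      simp only [diffLeft, LinearMap.coe_mk, AddHom.coe_mk, fwdDiff]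
      ring
    rw [pow_succ, Module.End.mul_apply, h1, ih, Function.iterate_succ_apply]

theorem diffRight_pow_mul (i : ℕ) (g h : ℕ → ℤ) :
    (diffRight ^ i) (fun x y => g x * h y) = fun x y => g x * ((fwdDiff 1)^[i] h) y := by
  induction i generalizing h with
  | zero => simp
  | succ i ih =>
    have h1 : diffRight (fun x y => g x * h y) = fun x y => g x * fwdDiff 1 h y := by
      ext x y
      simp only [diffRight, LinearMap.coe_mk, AddHom.coe_mk, fwdDiff]
      ring
    rw [pow_succ, Module.End.mul_apply, h1, ih, Function.iterate_succ_apply]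

/-- With `A = diffLeft` and `B = diffRight`, restricting to the diagonal intertwines
`A * B + (A + B) = (1 + A) * (1 + B) - 1` with the
forward difference in one variable. -/
theorem iter_fwdDiff_diagonal (m : ℕ) (F : ℕ → ℕ → ℤ) :
    (fwdDiff 1)^[m] (fun x => F x x) =
      fun x => ((diffLeft * diffRight + (diffLeft + diffRight)) ^ m) F x x := by
  induction m generalizing F with
  | zero => simp
  | succ m ih =>
    have h1 : fwdDiff 1 (fun x => F x x) =
        fun x => (diffLeft * diffRight + (diffLeft + diffRight)) F x x := by
      ext x
      simp only [LinearMap.add_apply, Module.End.mul_apply, diffLeft, diffRight,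
        LinearMap.coe_mk, AddHom.coe_mk, fwdDiff, Pi.add_apply]
      ring
    rw [pow_succ, Function.iterate_succ_apply, h1, ih]
    rfl

theorem diff_pow_expand (m : ℕ) :
    (diffLeft * diffRight + (diffLeft + diffRight)) ^ m =
      ∑ c ∈ Finset.range (m + 1), ∑ k ∈ Finset.range (m - c + 1),
        (m.choose c * (m - c).choose k) • (diffLeft ^ (k + c) * diffRight ^ (m - k)) := by
  have hAB := commute_diffLeft_diffRight
  have h : Commute (diffLeft * diffRight) (diffLeft + diffRight) :=
    ((Commute.refl _).mul_left hAB.symm).add_right (hAB.mul_left (Commute.refl _))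
  rw [h.add_pow]
  refine Finset.sum_congr rfl fun c hc => ?_
  rw [hAB.add_pow, Finset.mul_sum, Finset.sum_mul]
  refine Finset.sum_congr rfl fun k hk => ?_
  have hc' := Finset.mem_range.mp hc
  have hk' := Finset.mem_range.mp hk
  rw [show m - k = c + (m - c - k) by omega, hAB.mul_pow, pow_add, pow_add, nsmul_eq_mul]
  have h2 : diffRight ^ c * diffLeft ^ k = diffLeft ^ k * diffRight ^ c :=
    ((hAB.pow_pow k c).eq).symm
  have h3 : diffLeft ^ k * diffLeft ^ c = diffLeft ^ c * diffLeft ^ k := by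
    rw [← pow_add, ← pow_add, add_comm]
  rw [Nat.cast_mul, h3]
  have h4 : diffLeft ^ c * diffRight ^ c * (diffLeft ^ k * diffRight ^ (m - c - k)) =
      diffLeft ^ c * diffLeft ^ k * (diffRight ^ c * diffRight ^ (m - c - k)) := by
    rw [mul_assoc, ← mul_assoc (diffRight ^ c), h2]
    simp only [mul_assoc]
  rw [← h4, ← mul_assoc _ _ ((_ : ℕ) : Module.End ℤ (ℕ → ℕ → ℤ)), mul_assoc,
    ← Nat.cast_mul, ← Nat.cast_mul, (Nat.cast_commute _ _).eq, mul_comm ((m - c).choose k)]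

/-- Leibniz rule for iterated forward differences: each of the `m` differences falls on both factors
(`c` of them), on the first factor only (`k` of them), or on the second only. -/
theorem iter_fwdDiff_mul (m : ℕ) (g h : ℕ → ℤ) (x : ℕ) :
    (fwdDiff 1)^[m] (fun x => g x * h x) x =
      ∑ c ∈ Finset.range (m + 1), ∑ k ∈ Finset.range (m - c + 1),
        (m.choose c : ℤ) * ((m - c).choose k : ℤ) * (fwdDiff 1)^[k + c] g x *
          (fwdDiff 1)^[m - k] h x := by
  rw [iter_fwdDiff_diagonal m (fun x y => g x * h y), diff_pow_expand]
  simp only [LinearMap.sum_apply, Finset.sum_apply, LinearMap.smul_apply, Pi.smul_apply,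
    Module.End.mul_apply, diffRight_pow_mul, diffLeft_pow_mul]
  simp only [nsmul_eq_mul, Nat.cast_mul, mul_assoc]

theorem iter_fwdDiff_shift (m : ℕ) (g : ℕ → ℤ) (x : ℕ) :
    (fwdDiff 1)^[m] (fun y => g (y + 1)) x =
      (fwdDiff 1)^[m] g x + (fwdDiff 1)^[m + 1] g x := by
  have h : (fun y => g (y + 1)) = g + fwdDiff 1 g := by
    ext y
    simp only [Pi.add_apply, fwdDiff]
    ring
  rw [h, fwdDiff_iter_add, Pi.add_apply, Function.iterate_succ_apply]

theorem T_zero (m : ℕ) : T 0 m = m := by rw [T]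

theorem T_succ (n m : ℕ) :
    T (n + 1) m = T n (m + 1) + ∑ i ∈ Finset.range (n + 1), T i m * T (n - i) m := by
  rw [T, Finset.sum_attach (Finset.range (n + 1)) (fun i => T i m * T (n - i) m)]

theorem f_zero (m : ℕ) : f 0 m = if m = 1 then 1 else 0 := by rw [f]

theorem f_succ (n m : ℕ) :
    f (n + 1) m = f n m + f n (m + 1) +
      ∑ p ∈ Finset.range (n + 1), ∑ c ∈ Finset.range (m + 1), ∑ k ∈ Finset.range (m - c + 1),
        m.choose c * (m - c).choose k * f p (k + c) * f (n - p) (m - k) := by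
  rw [f, Finset.sum_attach (Finset.range (n + 1)) (fun p => ∑ c ∈ Finset.range (m + 1),
    ∑ k ∈ Finset.range (m - c + 1),
      m.choose c * (m - c).choose k * f p (k + c) * f (n - p) (m - k))]

/-- `f n m` is the `m`-th Newton coefficient of `T n`. -/
theorem f_eq_iter_fwdDiff (n m : ℕ) :
    (f n m : ℤ) = (fwdDiff 1)^[m] (fun x => (T n x : ℤ)) 0 := by
  induction n using Nat.strong_induction_on generalizing m with
  | _ n ih =>
  cases n with
  | zero =>
    simp only [f_zero, T_zero]
    have h1 : fwdDiff 1 (fun x : ℕ => (x : ℤ)) = fun _ => 1 := by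
      ext x
      simp [fwdDiff]
    have h2 : fwdDiff 1 (fun _ : ℕ => (1 : ℤ)) = fun _ => 0 := by
      ext x
      simp [fwdDiff]
    have h3 : fwdDiff 1 (fun _ : ℕ => (0 : ℤ)) = fun _ => 0 := by
      ext x
      simp [fwdDiff]
    match m with
    | 0 => simp
    | 1 => simp [h1]
    | m + 2 =>
      rw [Function.iterate_succ_apply, Function.iterate_succ_apply, h1, h2,
        Function.iterate_fixed h3]
      simp
  | succ n =>
    have hT : (fun x => (T (n + 1) x : ℤ)) = (fun x => (T n (x + 1) : ℤ)) +
        ∑ p ∈ Finset.range (n + 1), fun x => (T p x : ℤ) * (T (n - p) x : ℤ) := by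
      ext x
      simp [T_succ]
    rw [hT, fwdDiff_iter_add, fwdDiff_iter_finsetSum, Pi.add_apply, Finset.sum_apply,
      iter_fwdDiff_shift m (fun x => (T n x : ℤ)), f_succ]
    push_cast
    rw [ih n (Nat.lt_succ_self n), ih n (Nat.lt_succ_self n)]
    congr 1
    refine Finset.sum_congr rfl fun p hp => ?_
    rw [iter_fwdDiff_mul]
    refine Finset.sum_congr rfl fun c _ => Finset.sum_congr rfl fun k _ => ?_
    rw [ih p (Finset.mem_range.mp hp), ih (n - p) (by omega)]

/-- `f n m = ∑_{i=0}^{m} (-1)^(m+i) * C(m,i) * T n i` as integers. -/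
theorem f_eq_alternating_sum (n m : ℕ) :
    (f n m : ℤ) = ∑ i ∈ Finset.range (m+1),
      (-1)^(m+i) * (Nat.choose m i : ℤ) * (T n i : ℤ) := by
  rw [f_eq_iter_fwdDiff, fwdDiff_iter_eq_sum_shift]
  refine Finset.sum_congr rfl fun i hi => ?_
  have hi' := Finset.mem_range.mp hi
  have h : (-1 : ℤ) ^ (m + i) = (-1) ^ (m - i) := by
    rw [show m + i = (m - i) + 2 * i by omega, pow_add, pow_mul]
    simp
  simp [h]
end
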